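/- arXiv:2502.02165 — 2 statements merged into one kernel-verified Lean document; each statement's English description precedes it below -/
import Mathlib

section
/- Let A be a real symmetric n×n matrix with nonnegative entries and all row sums positive, let D be the diagonal matrix with D_ii = Σ_j A_ij, and let Ā = D^{−1/2} A D^{−1/2}. Let E be a diagonal matrix with 0 ≤ E_ii < 1 for all i, and set E' := I − (I + E)^{−1/2}. Then the normalized version of A + DE (i.e., (D')^{−1/2}(A + DE)(D')^{−1/2} where D' is the diagonal matrix of row sums of A + DE) equals Ā − ĀE' − E'Ā + E'ĀE' + E − 2EE' + E'EE'. -/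
/-!
Write `S = D^{-1/2}` and `T = (I + E)^{-1/2}`. The row sums of `A + DE` are the diagonal entries of
`D (I + E)`, so the left-hand side is `T S (A + DE) S T = T Ā T + T E T`, using that diagonal
matrices commute and `S D S = I`. Expanding with `T = I - E'` gives the claim. The last two steps
are carried out entrywise, the identity `S D S = I` entering only on the diagonal.
-/

/-- The normalized version `D⁻¹ᐟ² B D⁻¹ᐟ²` of a matrix `B`, where `D` is the diagonal
matrix of row sums of `B`. -/
noncomputable def normalized {n : ℕ} (B : Matrix (Fin n) (Fin n) ℝ) :
    Matrix (Fin n) (Fin n) ℝ :=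
  Matrix.diagonal (fun i => (∑ j, B i j) ^ (-(1 : ℝ) / 2)) * B *
    Matrix.diagonal (fun i => (∑ j, B i j) ^ (-(1 : ℝ) / 2))

/-- Let `A` be real symmetric with nonnegative entries and positive row sums, `D` the
diagonal matrix of its row sums, `Ā = D⁻¹ᐟ² A D⁻¹ᐟ²`.  Let `E` be diagonal with
`0 ≤ E i i < 1` and `E' := I − (I + E)^{−1/2}`.  Then the normalized version of `A + DE`
equals `Ā − ĀE' − E'Ā + E'ĀE' + E − 2EE' + E'EE'`. -/
theorem normalized_add_diag_expansion {n : ℕ} (A : Matrix (Fin n) (Fin n) ℝ)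
    (hA : A.IsHermitian) (hnn : ∀ i j, 0 ≤ A i j) (hrow : ∀ i, 0 < ∑ j, A i j)
    (e : Fin n → ℝ) (he : ∀ i, 0 ≤ e i ∧ e i < 1) :
    normalized (A + Matrix.diagonal (fun i => ∑ j, A i j) * Matrix.diagonal e) =
      normalized A
        - normalized A * ((1 : Matrix (Fin n) (Fin n) ℝ) -
            Matrix.diagonal fun i => (1 + e i) ^ (-(1 : ℝ) / 2))
        - ((1 : Matrix (Fin n) (Fin n) ℝ) -
            Matrix.diagonal fun i => (1 + e i) ^ (-(1 : ℝ) / 2)) * normalized A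
        + ((1 : Matrix (Fin n) (Fin n) ℝ) -
            Matrix.diagonal fun i => (1 + e i) ^ (-(1 : ℝ) / 2)) * normalized A *
          ((1 : Matrix (Fin n) (Fin n) ℝ) -
            Matrix.diagonal fun i => (1 + e i) ^ (-(1 : ℝ) / 2))
        + Matrix.diagonal e
        - (2 : ℝ) • (Matrix.diagonal e * ((1 : Matrix (Fin n) (Fin n) ℝ) -
            Matrix.diagonal fun i => (1 + e i) ^ (-(1 : ℝ) / 2)))
        + ((1 : Matrix (Fin n) (Fin n) ℝ) -
            Matrix.diagonal fun i => (1 + e i) ^ (-(1 : ℝ) / 2)) * Matrix.diagonal e *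
          ((1 : Matrix (Fin n) (Fin n) ℝ) -
            Matrix.diagonal fun i => (1 + e i) ^ (-(1 : ℝ) / 2)) := by
  set t : Fin n → ℝ := fun i => (1 + e i) ^ (-(1 : ℝ) / 2) with ht
  set s : Fin n → ℝ := fun i => (∑ j, A i j) ^ (-(1 : ℝ) / 2) with hs
  have hsum : ∀ i, ∑ j, (A + Matrix.diagonal (fun i => ∑ j, A i j) * Matrix.diagonal e) i j
      = (∑ j, A i j) * (1 + e i) := by
    intro i
    simp [Matrix.diagonal_mul_diagonal, Matrix.diagonal_apply, Finset.sum_add_distrib, mul_add]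
  have hpow : ∀ i, ((∑ j, A i j) * (1 + e i)) ^ (-(1 : ℝ) / 2) = s i * t i := fun i =>
    Real.mul_rpow (hrow i).le (by linarith [(he i).1])
  have hds : ∀ i, (∑ j, A i j) * (s i * s i) = 1 := by
    intro i
    have h : s i * s i = (∑ j, A i j)⁻¹ := by
      rw [hs, ← Real.rpow_add (hrow i), ← Real.rpow_neg_one]
      norm_num
    rw [h, mul_inv_cancel₀ (hrow i).ne']
  have hone : (1 : Matrix (Fin n) (Fin n) ℝ) - Matrix.diagonal t
      = Matrix.diagonal fun i => 1 - t i := by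
    rw [← Matrix.diagonal_one, Matrix.diagonal_sub]
  rw [hone]
  unfold normalized
  simp only [hsum, hpow]
  ext i j
  simp only [Matrix.diagonal_mul_diagonal, Matrix.add_apply, Matrix.sub_apply, Matrix.smul_apply,
    Matrix.mul_diagonal, Matrix.diagonal_mul, smul_eq_mul]
  change _ = s i * A i j * s j - s i * A i j * s j * (1 - t j) - (1 - t i) * (s i * A i j * s j)
    + (1 - t i) * (s i * A i j * s j) * (1 - t j) + _ - _ + _
  by_cases hij : i = j
  · subst hij
    simp only [Matrix.diagonal_apply_eq]
    linear_combination (e i * t i * t i) * hds i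
  · simp only [Matrix.diagonal_apply_ne _ hij]
    ring
end

section
/- Let A be the n×n adjacency matrix of a connected finite simple graph on n ≥ 2 vertices and let D be the diagonal matrix with D_ii = Σ_j A_ij. Let E be a diagonal n×n matrix with 0 ≤ E_ii ≤ ε for all i, where 0 < ε < 1. Then λ₂ of the normalized version of A + DE is at most λ₂ of the normalized version of A, plus 6ε; that is, λ₂((D')^{−1/2}(A + DE)(D')^{−1/2}) ≤ λ₂(D^{−1/2} A D^{−1/2}) + 6ε, where D' is the diagonal matrix of row sums of A + DE. -/
/-!
Write `d` for the degrees and `N = D⁻¹ᐟ² A D⁻¹ᐟ²`.  The row sums of `A + DE` are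
`d i * (1 + e i)`, so with the diagonal contraction `F = (1 + E)⁻¹ᐟ²` the normalized version of
`A + DE` is `F N F + P`, where `P` is diagonal with entries in `[0, ε]`.

For a symmetric matrix, `λ₂` is the second singular value, which has the Courant–Fischer
description `min_v max_{x ⊥ v} ‖M x‖ / ‖x‖`; its two halves are `exists_norm_le_lambda2_mul` and
`lambda2_le_of_norm_le`.  Let `v` be an eigenvector of `N` of largest absolute eigenvalue.  If
`x ⊥ F v` then `F x ⊥ v`, hence
`‖(F N F + P) x‖ ≤ ‖N (F x)‖ + ε ‖x‖ ≤ λ₂(N) ‖F x‖ + ε ‖x‖ ≤ (λ₂(N) + ε) ‖x‖`.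
This gives the bound with `ε` in place of `6 ε`.
-/

open scoped Classical in
/-- `lambda2 M` is the second largest among the absolute values of the eigenvalues of the
real symmetric matrix `M`, counted with multiplicity (and `0` if `M` is not symmetric). -/
noncomputable def lambda2 {n : ℕ} (M : Matrix (Fin n) (Fin n) ℝ) : ℝ :=
  if h : M.IsHermitian then
    ((List.ofFn fun i => |h.eigenvalues i|).insertionSort (· ≥ ·)).getD 1 0
  else 0

open Matrix in
/-- The largest and second largest absolute eigenvalues, located at indices `i` and `j`. -/
lemma exists_index_lambda2 {n : ℕ} (hn : 2 ≤ n) {M : Matrix (Fin n) (Fin n) ℝ}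
    (hM : M.IsHermitian) :
    ∃ i j, i ≠ j ∧ lambda2 M = |hM.eigenvalues j| ∧ lambda2 M ≤ |hM.eigenvalues i| ∧
      ∀ k, k ≠ i → |hM.eigenvalues k| ≤ lambda2 M := by
  set f : Fin n → ℝ := fun i => |hM.eigenvalues i| with hf
  set σ := Tuple.sort (fun i => - f i) with hσ
  have hanti : Antitone (f ∘ σ) := fun a b hab => by
    have := Tuple.monotone_sort (fun i => - f i) hab
    simpa using this
  have hlist : (List.ofFn f).insertionSort (· ≥ ·) = List.ofFn (f ∘ σ) :=
    ((List.perm_insertionSort _ _).trans (σ.ofFn_comp_perm f).symm).eq_of_sortedGE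
      List.sortedGE_insertionSort hanti.sortedGE_ofFn
  have hl : lambda2 M = f (σ ⟨1, hn⟩) := by
    have h0 : lambda2 M = ((List.ofFn f).insertionSort (· ≥ ·)).getD 1 0 := by
      rw [lambda2, dif_pos hM]
    have hlen : 1 < (List.ofFn (f ∘ σ)).length := by simpa using show 1 < n by omega
    rw [h0, hlist, List.getD_eq_getElem _ _ hlen, List.getElem_ofFn]
    rfl
  refine ⟨σ ⟨0, by omega⟩, σ ⟨1, hn⟩, ?_, hl, ?_, ?_⟩
  · simp
  · rw [hl]
    exact hanti (by simp [Fin.le_def])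
  · intro k hk
    obtain ⟨m, rfl⟩ := σ.surjective k
    rw [hl]
    refine hanti ?_
    have : m ≠ ⟨0, by omega⟩ := fun h => hk (by rw [h])
    simp only [ne_eq, Fin.ext_iff] at this
    simp only [Fin.le_def]
    omega

open Matrix in
lemma inner_eigenvectorBasis_toEuclideanLin {n : ℕ} {M : Matrix (Fin n) (Fin n) ℝ}
    (hM : M.IsHermitian) (k : Fin n) (x : EuclideanSpace ℝ (Fin n)) :
    inner ℝ (hM.eigenvectorBasis k) (toEuclideanLin M x) =
      hM.eigenvalues k * inner ℝ (hM.eigenvectorBasis k) x := by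
  have hT : toEuclideanLin M (hM.eigenvectorBasis k) =
      hM.eigenvalues k • hM.eigenvectorBasis k := by
    ext l
    have := congrFun (hM.mulVec_eigenvectorBasis k) l
    simpa [toLpLin_apply] using this
  rw [← (isSymmetric_toEuclideanLin_iff.mpr hM) (hM.eigenvectorBasis k) x, hT, inner_smul_left]
  simp

/-- Easy half of Courant–Fischer: the top eigenvector `v` witnesses the minimum. -/
lemma exists_norm_le_lambda2_mul {n : ℕ} (hn : 2 ≤ n) {M : Matrix (Fin n) (Fin n) ℝ}
    (hM : M.IsHermitian) :
    0 ≤ lambda2 M ∧ ∃ v : EuclideanSpace ℝ (Fin n), ∀ x, inner ℝ v x = 0 →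
      ‖Matrix.toEuclideanLin M x‖ ≤ lambda2 M * ‖x‖ := by
  obtain ⟨i, j, -, hj, -, hle⟩ := exists_index_lambda2 hn hM
  have h0 : 0 ≤ lambda2 M := hj ▸ abs_nonneg _
  refine ⟨h0, hM.eigenvectorBasis i, fun x hx => ?_⟩
  refine le_of_sq_le_sq ?_ (by positivity)
  rw [mul_pow, ← hM.eigenvectorBasis.sum_sq_norm_inner_right,
    ← hM.eigenvectorBasis.sum_sq_norm_inner_right, Finset.mul_sum]
  refine Finset.sum_le_sum fun k _ => ?_
  rw [inner_eigenvectorBasis_toEuclideanLin, norm_mul, mul_pow]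
  by_cases hk : k = i
  · simp [hk, hx]
  · have := hle k hk
    rw [Real.norm_eq_abs]
    gcongr

/-- Hard half of Courant–Fischer: the plane spanned by the top two eigenvectors meets the
hyperplane `v⊥`, and `M` expands its vectors by at least `lambda2 M`. -/
lemma lambda2_le_of_norm_le {n : ℕ} (hn : 2 ≤ n) {M : Matrix (Fin n) (Fin n) ℝ}
    (hM : M.IsHermitian) {c : ℝ} (v : EuclideanSpace ℝ (Fin n))
    (hv : ∀ x, inner ℝ v x = 0 → ‖Matrix.toEuclideanLin M x‖ ≤ c * ‖x‖) :
    lambda2 M ≤ c := by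
  obtain ⟨i, j, hij, hj, hi, -⟩ := exists_index_lambda2 hn hM
  have h0 : 0 ≤ lambda2 M := hj ▸ abs_nonneg _
  set b := hM.eigenvectorBasis with hb
  obtain ⟨x, hx0, hvx, hxk⟩ : ∃ x, x ≠ 0 ∧ inner ℝ v x = 0 ∧
      ∀ k, k ≠ i → k ≠ j → inner ℝ (b k) x = 0 := by
    by_cases h : inner ℝ v (b j) = 0
    · exact ⟨b j, b.orthonormal.ne_zero j, h, fun k _ hk => b.orthonormal.2 hk⟩
    · refine ⟨inner ℝ v (b j) • b i - inner ℝ v (b i) • b j, fun hz => h ?_, ?_, ?_⟩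
      · have := congrArg (inner ℝ (b i)) hz
        simpa [inner_sub_right, inner_smul_right, b.orthonormal.2 hij] using this
      · simp only [inner_sub_right, inner_smul_right]
        ring
      · intro k hki hkj
        simp [inner_sub_right, inner_smul_right, b.orthonormal.2 hki, b.orthonormal.2 hkj]
  have hlow : lambda2 M * ‖x‖ ≤ ‖Matrix.toEuclideanLin M x‖ := by
    refine le_of_sq_le_sq ?_ (norm_nonneg _)
    rw [mul_pow, ← b.sum_sq_norm_inner_right, ← b.sum_sq_norm_inner_right, Finset.mul_sum]
    refine Finset.sum_le_sum fun k _ => ?_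
    rw [inner_eigenvectorBasis_toEuclideanLin, norm_mul, mul_pow, ← hb,
      Real.norm_eq_abs (hM.eigenvalues k)]
    by_cases hki : k = i
    · subst hki
      gcongr
    by_cases hkj : k = j
    · rw [hkj, hj]
    · simp [hxk k hki hkj]
  exact le_of_mul_le_mul_right (hlow.trans (hv x hvx)) (norm_pos_iff.mpr hx0)

lemma norm_toEuclideanLin_diagonal_le {n : ℕ} {f : Fin n → ℝ} {c : ℝ} (hc : 0 ≤ c)
    (hf : ∀ i, |f i| ≤ c) (x : EuclideanSpace ℝ (Fin n)) :
    ‖Matrix.toEuclideanLin (Matrix.diagonal f) x‖ ≤ c * ‖x‖ := by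
  refine le_of_sq_le_sq ?_ (by positivity)
  rw [mul_pow, EuclideanSpace.norm_sq_eq, EuclideanSpace.norm_sq_eq, Finset.mul_sum]
  refine Finset.sum_le_sum fun k _ => ?_
  have := hf k
  simp only [Matrix.toLpLin_apply, Matrix.mulVec_diagonal, norm_mul, mul_pow,
    Real.norm_eq_abs]
  gcongr

open Matrix in
/-- `λ₂` does not grow under compression by a diagonal contraction, and grows by at most `ε`
under adding a diagonal matrix of norm at most `ε`. -/
lemma lambda2_diagonal_conj_add_le {n : ℕ} (hn : 2 ≤ n) {N : Matrix (Fin n) (Fin n) ℝ}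
    (hN : N.IsHermitian) {f p : Fin n → ℝ} {ε : ℝ} (hε : 0 ≤ ε)
    (hf : ∀ i, |f i| ≤ 1) (hp : ∀ i, |p i| ≤ ε) :
    lambda2 (diagonal f * N * diagonal f + diagonal p) ≤ lambda2 N + ε := by
  have hD (g : Fin n → ℝ) : (diagonal g).IsHermitian := isHermitian_diagonal g
  have hM : (diagonal f * N * diagonal f + diagonal p).IsHermitian := by
    refine IsHermitian.add ?_ (hD p)
    have := isHermitian_mul_mul_conjTranspose (diagonal f) hN
    rwa [(hD f).eq] at this
  obtain ⟨h0, v, hv⟩ := exists_norm_le_lambda2_mul hn hN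
  refine lambda2_le_of_norm_le hn hM (toEuclideanLin (diagonal f) v) fun x hx => ?_
  rw [(isSymmetric_toEuclideanLin_iff.mpr (hD f)) v x] at hx
  have hdec : toEuclideanLin (diagonal f * N * diagonal f + diagonal p) x =
      toEuclideanLin (diagonal f) (toEuclideanLin N (toEuclideanLin (diagonal f) x)) +
        toEuclideanLin (diagonal p) x := by
    ext l
    simp [toLpLin_apply, mulVec_mulVec, Matrix.mul_assoc]
  rw [hdec, add_mul]
  refine (norm_add_le _ _).trans (add_le_add ?_ (norm_toEuclideanLin_diagonal_le hε hp x))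
  have hF := norm_toEuclideanLin_diagonal_le zero_le_one hf
  simp only [one_mul] at hF
  exact (hF _).trans ((hv _ hx).trans (mul_le_mul_of_nonneg_left (hF x) h0))

/-- At a vertex of degree `d`, the normalized self-loop weight stays below `ε`; the degenerate
value `0 ^ (-1 / 2) = 0` is harmless. -/
lemma abs_self_loop_le {d e ε : ℝ} (hd : 0 ≤ d) (he0 : 0 ≤ e) (heε : e ≤ ε) :
    |(d * (1 + e)) ^ (-(1 : ℝ) / 2) * (d * e) * (d * (1 + e)) ^ (-(1 : ℝ) / 2)| ≤ ε := by
  rcases hd.eq_or_lt with rfl | hd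
  · simpa using he0.trans heε
  have hpos : 0 < d * (1 + e) := by positivity
  have hsq : (d * (1 + e)) ^ (-(1 : ℝ) / 2) * (d * (1 + e)) ^ (-(1 : ℝ) / 2) =
      (d * (1 + e))⁻¹ := by
    rw [← Real.rpow_add hpos, ← Real.rpow_neg_one]
    norm_num
  rw [mul_right_comm, hsq, abs_of_nonneg (by positivity)]
  have : (d * (1 + e))⁻¹ * (d * e) = e / (1 + e) := by field_simp
  rw [this]
  exact (div_le_self he0 (by linarith)).trans heε

open Matrix in
/-- Normalizing after adding self-loops of weight `d i * e i` amounts to conjugating the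
normalized matrix by `(1 + E)⁻¹ᐟ²` and adding a diagonal matrix. -/
lemma normalized_add_self_loops {n : ℕ} (A : Matrix (Fin n) (Fin n) ℝ) (e : Fin n → ℝ)
    (hA : ∀ i, 0 ≤ ∑ j, A i j) (he : ∀ i, 0 ≤ e i) :
    normalized (A + diagonal (fun i => ∑ j, A i j) * diagonal e) =
      diagonal (fun i => (1 + e i) ^ (-(1 : ℝ) / 2)) * normalized A *
          diagonal (fun i => (1 + e i) ^ (-(1 : ℝ) / 2)) +
        diagonal (fun i => ((∑ j, A i j) * (1 + e i)) ^ (-(1 : ℝ) / 2) * ((∑ j, A i j) * e i) *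
          ((∑ j, A i j) * (1 + e i)) ^ (-(1 : ℝ) / 2)) := by
  have hrow (i : Fin n) : ∑ j, (A + diagonal (fun i => ∑ j, A i j) * diagonal e) i j =
      (∑ j, A i j) * (1 + e i) := by
    simp [diagonal_mul_diagonal, Finset.sum_add_distrib, diagonal_apply, mul_add]
  have hmul (i : Fin n) : ((∑ j, A i j) * (1 + e i)) ^ (-(1 : ℝ) / 2) =
      (∑ j, A i j) ^ (-(1 : ℝ) / 2) * (1 + e i) ^ (-(1 : ℝ) / 2) :=
    Real.mul_rpow (hA i) (by linarith [he i])
  ext i j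
  simp only [normalized, hrow]
  simp only [hmul, diagonal_mul_diagonal, mul_diagonal, diagonal_mul, Matrix.add_apply, diagonal_apply]
  split_ifs with h
  · subst h
    ring
  · ring

/-- Eigenvalue-shift lemma: for a connected simple graph on `n ≥ 2` vertices with adjacency
matrix `A` and degree diagonal `D`, and a diagonal matrix `E` with `0 ≤ E i i ≤ ε` for some
`0 < ε < 1`, we have `λ₂` of the normalized version of `A + DE` is at most `λ₂` of the
normalized version of `A`, plus `6ε`. -/
theorem lambda2_normalized_add_self_loops_le {n : ℕ} (hn : 2 ≤ n)
    (G : SimpleGraph (Fin n)) [DecidableRel G.Adj] (hconn : G.Connected)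
    (ε : ℝ) (hε0 : 0 < ε) (hε1 : ε < 1)
    (e : Fin n → ℝ) (he : ∀ i, 0 ≤ e i ∧ e i ≤ ε) :
    lambda2 (normalized (G.adjMatrix ℝ +
        Matrix.diagonal (fun i => ∑ j, G.adjMatrix ℝ i j) * Matrix.diagonal e)) ≤
      lambda2 (normalized (G.adjMatrix ℝ)) + 6 * ε := by
  have hd (i : Fin n) : 0 ≤ ∑ j, G.adjMatrix ℝ i j :=
    Finset.sum_nonneg fun j _ => by
      rw [SimpleGraph.adjMatrix_apply]
      split_ifs <;> norm_num
  have hN : (normalized (G.adjMatrix ℝ)).IsHermitian := by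
    have h := Matrix.isHermitian_mul_mul_conjTranspose
      (Matrix.diagonal fun i => (∑ j, G.adjMatrix ℝ i j) ^ (-(1 : ℝ) / 2))
      (A := G.adjMatrix ℝ) (by
        rw [Matrix.IsHermitian, Matrix.conjTranspose_eq_transpose_of_trivial,
          SimpleGraph.transpose_adjMatrix])
    rwa [(Matrix.isHermitian_diagonal _).eq] at h
  rw [normalized_add_self_loops _ e hd fun i => (he i).1]
  have hle := lambda2_diagonal_conj_add_le hn hN hε0.le
    (f := fun i => (1 + e i) ^ (-(1 : ℝ) / 2))
    (fun i => by
      have h1 : 1 ≤ 1 + e i := by linarith [(he i).1]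
      rw [abs_of_nonneg (by positivity)]
      exact Real.rpow_le_one_of_one_le_of_nonpos h1 (by norm_num))
    (fun i => abs_self_loop_le (hd i) (he i).1 (he i).2)
  linarith
end
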